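/- Two finite simple graphs G and H are equivalent (there exists an isomorphism of their coherent algebras mapping A_G to A_H) if and only if G ≅_{DNN} H, i.e., there exists a DNN-isomorphism matrix for G to H. -/

import Mathlib

open Matrix BigOperators

/-- `rel(g,g') = rel(h,h')`. -/
def relEq {α β : Type*} (G : SimpleGraph α) (H : SimpleGraph β)
    (g g' : α) (h h' : β) : Prop :=
  (g = g' ↔ h = h') ∧ (G.Adj g g' ↔ H.Adj h h')

/-- `M` satisfies the linear constraints of an isomorphism matrix for `G` to `H`. -/
def IsIsoMatrix {α β : Type*} [Fintype α] [Fintype β]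
    (G : SimpleGraph α) (H : SimpleGraph β)
    (M : Matrix (α × β) (α × β) ℝ) : Prop :=
  (∀ g g' : α, ∑ h : β, ∑ h' : β, M (g, h) (g', h') = 1) ∧
  (∀ h h' : β, ∑ g : α, ∑ g' : α, M (g, h) (g', h') = 1) ∧
  (∀ g g' h h', ¬ relEq G H g g' h h' → M (g, h) (g', h') = 0)

/-- The all-ones matrix. -/
def allOnes (V : Type*) : Matrix V V ℂ := Matrix.of fun _ _ => 1

/-- A subspace `S` of `ℂ^{V×V}` is a coherent algebra containing `A` if it contains
`I`, `A` and `J`, and is closed under matrix multiplication, conjugate transposition,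
and Schur (entrywise) product. -/
def IsCoherentWith {V : Type*} [Fintype V] [DecidableEq V]
    (A : Matrix V V ℂ) (S : Submodule ℂ (Matrix V V ℂ)) : Prop :=
  (1 : Matrix V V ℂ) ∈ S ∧ A ∈ S ∧ allOnes V ∈ S ∧
  (∀ X ∈ S, ∀ Y ∈ S, X * Y ∈ S) ∧
  (∀ X ∈ S, Xᴴ ∈ S) ∧
  (∀ X ∈ S, ∀ Y ∈ S, Matrix.hadamard X Y ∈ S)

/-- The coherent algebra of a graph: the smallest coherent algebra containing the
adjacency matrix. -/
noncomputable def cohAlgebra {V : Type*} [Fintype V] [DecidableEq V] (A : Matrix V V ℂ) :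
    Submodule ℂ (Matrix V V ℂ) :=
  sInf {S | IsCoherentWith A S}

/-- `G` and `H` are equivalent: there is an isomorphism of their coherent algebras
(respecting conjugate transposition, matrix multiplication and Schur product)
mapping `A_G` to `A_H`. -/
def GraphEquivalent {α β : Type*} [Fintype α] [Fintype β] [DecidableEq α] [DecidableEq β]
    (G : SimpleGraph α) (H : SimpleGraph β)
    [DecidableRel G.Adj] [DecidableRel H.Adj] : Prop :=
  ∃ Φ : Matrix α α ℂ →ₗ[ℂ] Matrix β β ℂ,
    Set.BijOn Φ (cohAlgebra (G.adjMatrix ℂ) : Set (Matrix α α ℂ))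
      (cohAlgebra (H.adjMatrix ℂ) : Set (Matrix β β ℂ)) ∧
    (∀ M ∈ cohAlgebra (G.adjMatrix ℂ), Φ Mᴴ = (Φ M)ᴴ) ∧
    (∀ M ∈ cohAlgebra (G.adjMatrix ℂ), ∀ N ∈ cohAlgebra (G.adjMatrix ℂ),
      Φ (M * N) = Φ M * Φ N) ∧
    (∀ M ∈ cohAlgebra (G.adjMatrix ℂ), ∀ N ∈ cohAlgebra (G.adjMatrix ℂ),
      Φ (Matrix.hadamard M N) = Matrix.hadamard (Φ M) (Φ N)) ∧
    Φ (G.adjMatrix ℂ) = H.adjMatrix ℂ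

/-!
Both directions pass between a linear map `Φ` and its Choi matrix
`N (g, h) (g', h') = Φ (E g g') h h'`, where `E` is the reproducing kernel of the coherent algebra.

Given an isomorphism `Φ`, compatibility with the Schur product gives the sign and zero pattern
of `N`, because `W ⊙ E g g' = W g g' • E g g'`. The remaining products give `N * N = (1 ⊗ₖ K) * N`
with `K` positive semidefinite; on an eigenvector of `N` with a nonzero eigenvalue, `N` then acts
like `1 ⊗ₖ K`, so the eigenvalue is positive.

Given `N`, its Choi map sends `X` to `Y`, and the Choi map in the other direction sends `Y` back
to `X`, exactly when `X g g' = Y h h'` on the support of `N`: this is the equality case of the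
Schwarz inequality. Positivity of `N` turns this agreement into the intertwining relation
`(Xᵀ ⊗ₖ 1) * N = (1 ⊗ₖ Y) * N`, so such pairs are closed under products. The matrices that occur
in such a pair thus form a coherent algebra, and minimality does the rest.
-/

section PosSemidef

open scoped MatrixOrder ComplexOrder

variable {𝕜 m n : Type*} [RCLike 𝕜] [Fintype m] [Fintype n]

theorem mul_eq_zero_of_trace_mul_conjTranspose_mul_self_eq_zero {N : Matrix n n 𝕜}
    (hN : N.PosSemidef) {D : Matrix m n 𝕜} (h : trace (N * (Dᴴ * D)) = 0) : D * N = 0 := by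
  classical
  obtain ⟨B, rfl⟩ := CStarAlgebra.nonneg_iff_eq_star_mul_self.mp hN.nonneg
  rw [star_eq_conjTranspose] at h ⊢
  have hDB : D * Bᴴ = 0 := by
    rw [← trace_mul_conjTranspose_self_eq_zero_iff, ← h, conjTranspose_mul,
      conjTranspose_conjTranspose, Matrix.mul_assoc, trace_mul_comm]
    simp only [Matrix.mul_assoc]
  rw [← Matrix.mul_assoc, hDB, Matrix.zero_mul]

theorem posSemidef_of_mul_self_eq_mul {N K : Matrix n n 𝕜} (hN : N.IsHermitian)
    (hK : K.PosSemidef) (h : N * N = K * N) : N.PosSemidef := by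
  classical
  rw [hN.posSemidef_iff_eigenvalues_nonneg]
  intro i
  by_contra hneg
  replace hneg : hN.eigenvalues i < 0 := not_le.mp hneg
  set v : n → 𝕜 := ⇑(hN.eigenvectorBasis i)
  have hNv : N *ᵥ v = hN.eigenvalues i • v := hN.mulVec_eigenvectorBasis i
  have hNK : N *ᵥ v = K *ᵥ v := by
    have hNNv : N *ᵥ (N *ᵥ v) = K *ᵥ (N *ᵥ v) := by simp only [mulVec_mulVec, h]
    rw [hNv, mulVec_smul, mulVec_smul] at hNNv
    exact smul_right_injective _ hneg.ne hNNv
  have hquad : hN.eigenvalues i = RCLike.re (star v ⬝ᵥ (K *ᵥ v)) := hNK ▸ hN.eigenvalues_eq i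
  exact hneg.not_ge (hquad ▸ (RCLike.nonneg_iff.mp (hK.dotProduct_mulVec_nonneg v)).1)

theorem posSemidef_map_ofReal_iff {n : Type*} [Finite n] {M : Matrix n n ℝ} :
    (M.map ((↑) : ℝ → 𝕜)).PosSemidef ↔ M.PosSemidef := by
  classical
  cases nonempty_fintype n
  constructor <;> intro hM
  · refine .of_dotProduct_mulVec_nonneg (.ext fun i j => ?_) fun x => ?_
    · simpa using hM.isHermitian.apply i j
    · have hx := hM.dotProduct_mulVec_nonneg fun i => (x i : 𝕜)
      simp only [dotProduct, mulVec, map_apply, Pi.star_apply, RCLike.star_def,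
        RCLike.conj_ofReal] at hx
      simpa [dotProduct, mulVec] using mod_cast hx
  · obtain ⟨B, rfl⟩ := CStarAlgebra.nonneg_iff_eq_star_mul_self.mp hM.nonneg
    convert posSemidef_conjTranspose_mul_self (B.map ((↑) : ℝ → 𝕜)) using 1
    ext i j
    simp [mul_apply, star_apply]

end PosSemidef

section Choi

open scoped Kronecker

variable {R α β : Type*} [CommSemiring R] [Fintype α]

/-- The linear map whose Choi matrix is `N`: it sends the matrix unit at `(g, g')` to the matrix
with entries `N (g, h) (g', h')`. -/
def choiMap (N : Matrix (α × β) (α × β) R) : Matrix α α R →ₗ[R] Matrix β β R where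
  toFun X := .of fun h h' => ∑ g, ∑ g', N (g, h) (g', h') * X g g'
  map_add' X Y := by
    ext h h'
    simp [mul_add, Finset.sum_add_distrib]
  map_smul' c X := by
    ext h h'
    simp [Finset.mul_sum, mul_left_comm]

theorem choiMap_apply (N : Matrix (α × β) (α × β) R) (X : Matrix α α R) (h h' : β) :
    choiMap N X h h' = ∑ g, ∑ g', N (g, h) (g', h') * X g g' := rfl

/-- The matrix `N` with its two tensor factors interchanged. Its Choi map is the transpose of that
of `N` for the pairing `trace (X * Yᵀ)`. -/
def swapFactors (N : Matrix (α × β) (α × β) R) : Matrix (β × α) (β × α) R :=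
  N.submatrix Prod.swap Prod.swap

variable [Fintype β]

theorem trace_mul_transpose_kronecker (N : Matrix (α × β) (α × β) R) (P : Matrix α α R)
    (Q : Matrix β β R) : trace (N * (Pᵀ ⊗ₖ Q)) = trace (choiMap N P * Q) := by
  simp only [trace, diag, mul_apply, Fintype.sum_prod_type, choiMap_apply, kroneckerMap_apply,
    transpose_apply, Finset.sum_mul, mul_assoc]
  rw [Finset.sum_comm]
  refine Finset.sum_congr rfl fun h _ => ?_
  exact (Finset.sum_congr rfl fun g _ => Finset.sum_comm).trans Finset.sum_comm

theorem trace_mul_kronecker_transpose (N : Matrix (α × β) (α × β) R) (P : Matrix α α R)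
    (Q : Matrix β β R) : trace (N * (P ⊗ₖ Qᵀ)) = trace (choiMap (swapFactors N) Q * P) := by
  rw [← trace_mul_transpose_kronecker]
  simp only [trace, diag, mul_apply, kroneckerMap_apply, swapFactors, submatrix_apply]
  refine Fintype.sum_equiv (.prodComm α β) _ _ fun p => ?_
  exact Fintype.sum_equiv (.prodComm α β) _ _ fun q => by simp [mul_comm (P _ _)]

end Choi

section Coherent

variable {α : Type*} [Fintype α] [DecidableEq α]

/-- `S` is a coherent algebra: a unital `*`-subalgebra of the full matrix algebra that is also a
unital algebra under the Schur product. -/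
structure IsCoherent (S : Submodule ℂ (Matrix α α ℂ)) : Prop where
  one_mem : 1 ∈ S
  allOnes_mem : allOnes α ∈ S
  mul_mem : ∀ {X Y}, X ∈ S → Y ∈ S → X * Y ∈ S
  conjTranspose_mem : ∀ {X}, X ∈ S → Xᴴ ∈ S
  hadamard_mem : ∀ {X Y}, X ∈ S → Y ∈ S → X ⊙ Y ∈ S

theorem isCoherentWith_iff {A : Matrix α α ℂ} {S : Submodule ℂ (Matrix α α ℂ)} :
    IsCoherentWith A S ↔ A ∈ S ∧ IsCoherent S :=
  ⟨fun ⟨h1, hA, hJ, hmul, hstar, hhad⟩ =>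
    ⟨hA, h1, hJ, fun hX hY => hmul _ hX _ hY, fun hX => hstar _ hX, fun hX hY => hhad _ hX _ hY⟩,
  fun ⟨hA, hS⟩ => ⟨hS.one_mem, hA, hS.allOnes_mem, fun _ hX _ hY => hS.mul_mem hX hY,
    fun _ hX => hS.conjTranspose_mem hX, fun _ hX _ hY => hS.hadamard_mem hX hY⟩⟩

theorem mem_cohAlgebra_iff {A X : Matrix α α ℂ} :
    X ∈ cohAlgebra A ↔ ∀ S, A ∈ S → IsCoherent S → X ∈ S := by
  simp [cohAlgebra, Submodule.mem_sInf, isCoherentWith_iff]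

theorem self_mem_cohAlgebra (A : Matrix α α ℂ) : A ∈ cohAlgebra A :=
  mem_cohAlgebra_iff.mpr fun _ hA _ => hA

theorem isCoherent_cohAlgebra (A : Matrix α α ℂ) : IsCoherent (cohAlgebra A) where
  one_mem := mem_cohAlgebra_iff.mpr fun _ _ hS => hS.one_mem
  allOnes_mem := mem_cohAlgebra_iff.mpr fun _ _ hS => hS.allOnes_mem
  mul_mem hX hY := mem_cohAlgebra_iff.mpr fun S hA hS =>
    hS.mul_mem (mem_cohAlgebra_iff.mp hX S hA hS) (mem_cohAlgebra_iff.mp hY S hA hS)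
  conjTranspose_mem hX := mem_cohAlgebra_iff.mpr fun S hA hS =>
    hS.conjTranspose_mem (mem_cohAlgebra_iff.mp hX S hA hS)
  hadamard_mem hX hY := mem_cohAlgebra_iff.mpr fun S hA hS =>
    hS.hadamard_mem (mem_cohAlgebra_iff.mp hX S hA hS) (mem_cohAlgebra_iff.mp hY S hA hS)

namespace IsCoherent

variable {S : Submodule ℂ (Matrix α α ℂ)}

theorem map_eval_mem (hS : IsCoherent S) {X : Matrix α α ℂ} (hX : X ∈ S)
    (p : Polynomial ℂ) : X.map p.eval ∈ S := by
  have hpow (k : ℕ) : X.map (· ^ k) ∈ S := by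
    induction k with
    | zero => convert hS.allOnes_mem using 1; ext; simp [allOnes]
    | succ k ih => convert hS.hadamard_mem ih hX using 1; ext; simp [pow_succ]
  induction p using Polynomial.induction_on' with
  | add p q hp hq => convert S.add_mem hp hq using 1; ext; simp
  | monomial k a => convert S.smul_mem a (hpow k) using 1; ext; simp

-- Lagrange interpolation: on the finitely many entries of `X`, `f` agrees with a polynomial.
theorem map_mem (hS : IsCoherent S) {X : Matrix α α ℂ} (hX : X ∈ S) (f : ℂ → ℂ) :
    X.map f ∈ S := by
  convert hS.map_eval_mem hX
    (Lagrange.interpolate (Finset.univ.image fun p : α × α => X p.1 p.2) id f) using 1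
  ext i j
  exact (Lagrange.eval_interpolate_at_node (v := id) f Function.injective_id.injOn
    (Finset.mem_image_of_mem (fun p : α × α => X p.1 p.2) (Finset.mem_univ (i, j)))).symm

theorem transpose_mem (hS : IsCoherent S) {X : Matrix α α ℂ} (hX : X ∈ S) : Xᵀ ∈ S := by
  convert hS.map_mem (hS.conjTranspose_mem hX) star using 1
  ext
  simp

end IsCoherent

end Coherent

section AllOnes

variable {α : Type*} [Fintype α]

theorem trace_allOnes_mul_transpose (X : Matrix α α ℂ) :
    trace (allOnes α * Xᵀ) = ∑ g, ∑ g', X g g' := by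
  simp [← sum_hadamard_eq, allOnes]

theorem allOnes_mul_mul_allOnes (X : Matrix α α ℂ) :
    allOnes α * X * allOnes α = (∑ g, ∑ g', X g g') • allOnes α := by
  ext i j
  simp only [allOnes, mul_apply, of_apply, one_mul, mul_one, Matrix.smul_apply, smul_eq_mul]
  exact Finset.sum_comm

end AllOnes

section ReproducingKernel

variable {α : Type*} [Fintype α]

/-- `E` is the reproducing kernel of `S` for the bilinear form `⟨W, X⟩ = trace (W * Xᵀ)`:
pairing with `E g k ∈ S` evaluates the elements of `S` at `(g, k)`. When `S` is closed under
entrywise conjugation, `E g k` is the orthogonal projection to `S` of the matrix unit at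
`(g, k)`. -/
structure IsReproducingKernel (S : Submodule ℂ (Matrix α α ℂ)) (E : α → α → Matrix α α ℂ) :
    Prop where
  mem : ∀ g k, E g k ∈ S
  trace_mul : ∀ g k, ∀ W ∈ S, trace (W * (E g k)ᵀ) = W g k

open scoped ComplexOrder in
theorem exists_isReproducingKernel {S : Submodule ℂ (Matrix α α ℂ)}
    (hS : ∀ X ∈ S, Xᴴᵀ ∈ S) : ∃ E, IsReproducingKernel S E := by
  let pairing : S →ₗ[ℂ] Module.Dual ℂ S := LinearMap.mk₂ ℂ (fun X W => trace (W.val * X.valᵀ))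
    (by simp [mul_add]) (by simp) (by simp [add_mul]) (by simp)
  have hinj : Function.Injective pairing := by
    refine (injective_iff_map_eq_zero pairing).mpr fun X hX => Subtype.ext ?_
    have hXX : trace (X.valᴴᵀ * X.valᵀ) = 0 := LinearMap.congr_fun hX ⟨_, hS _ X.2⟩
    rwa [trace_transpose_mul, trace_conjTranspose_mul_self_eq_zero_iff] at hXX
  have hsurj : Function.Surjective pairing :=
    (LinearMap.injective_iff_surjective_of_finrank_eq_finrank Subspace.dual_finrank_eq.symm).mp hinj
  choose E hE using fun g k => hsurj (entryLinearMap ℂ ℂ g k ∘ₗ S.subtype)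
  exact ⟨fun g k => E g k, fun g k => (E g k).2, fun g k W hW =>
    LinearMap.congr_fun (hE g k) ⟨W, hW⟩⟩

namespace IsReproducingKernel

variable {S : Submodule ℂ (Matrix α α ℂ)} {E : α → α → Matrix α α ℂ}

theorem apply_comm (hE : IsReproducingKernel S E) (g k a b : α) : E g k a b = E a b g k := by
  rw [← hE.trace_mul a b _ (hE.mem g k), ← hE.trace_mul g k _ (hE.mem a b), ← trace_transpose,
    transpose_mul, transpose_transpose]

theorem ext (hE : IsReproducingKernel S E) {X Y : Matrix α α ℂ} (hX : X ∈ S) (hY : Y ∈ S)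
    (h : ∀ W ∈ S, trace (W * Xᵀ) = trace (W * Yᵀ)) : X = Y := by
  ext g k
  rw [← hE.trace_mul g k X hX, ← hE.trace_mul g k Y hY, ← trace_transpose (X * _),
    ← trace_transpose (Y * _)]
  simpa only [transpose_mul, transpose_transpose] using h _ (hE.mem g k)

theorem sum_smul (hE : IsReproducingKernel S E) {X : Matrix α α ℂ} (hX : X ∈ S) :
    ∑ a, ∑ b, X a b • E a b = X := by
  ext g k
  rw [← hE.trace_mul g k X hX, ← sum_hadamard_eq]
  simp [Matrix.sum_apply, hE.apply_comm g k]

end IsReproducingKernel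

end ReproducingKernel

section CoherentKernel

variable {α : Type*} [Fintype α] [DecidableEq α] {S : Submodule ℂ (Matrix α α ℂ)}
  {E : α → α → Matrix α α ℂ}

theorem IsCoherent.exists_isReproducingKernel (hS : IsCoherent S) :
    ∃ E, IsReproducingKernel S E :=
  _root_.exists_isReproducingKernel fun _ hX => hS.transpose_mem (hS.conjTranspose_mem hX)

namespace IsReproducingKernel

theorem transpose (hE : IsReproducingKernel S E) (hS : IsCoherent S) (g k : α) :
    (E g k)ᵀ = E k g := by
  refine hE.ext (hS.transpose_mem (hE.mem g k)) (hE.mem k g) fun W hW => ?_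
  rw [hE.trace_mul k g W hW, transpose_transpose, ← trace_transpose_mul,
    hE.trace_mul g k _ (hS.transpose_mem hW), transpose_apply]

theorem conjTranspose (hE : IsReproducingKernel S E) (hS : IsCoherent S) (g k : α) :
    (E g k)ᴴ = E k g := by
  refine hE.ext (hS.conjTranspose_mem (hE.mem g k)) (hE.mem k g) fun W hW => star_injective ?_
  rw [hE.trace_mul k g W hW, ← conjTranspose_apply,
    ← hE.trace_mul g k _ (hS.conjTranspose_mem hW), ← trace_conjTranspose, conjTranspose_mul,
    trace_mul_comm]
  congr 2
  ext
  simp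

theorem hadamard (hE : IsReproducingKernel S E) (hS : IsCoherent S) {W : Matrix α α ℂ}
    (hW : W ∈ S) (g k : α) : W ⊙ E g k = W g k • E g k := by
  refine hE.ext (hS.hadamard_mem hW (hE.mem g k)) (S.smul_mem _ (hE.mem g k)) fun V hV => ?_
  rw [← sum_hadamard_eq, ← hadamard_assoc, sum_hadamard_eq,
    hE.trace_mul g k _ (hS.hadamard_mem hV hW), transpose_smul, mul_smul_comm, trace_smul,
    hE.trace_mul g k V hV, hadamard_apply, smul_eq_mul, mul_comm]

open scoped ComplexOrder in
theorem apply_self_nonneg (hE : IsReproducingKernel S E) (hS : IsCoherent S) (g k : α) :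
    0 ≤ E g k g k := by
  rw [← hE.trace_mul g k _ (hE.mem g k), hE.transpose hS, ← hE.conjTranspose hS g k]
  exact (posSemidef_self_mul_conjTranspose _).trace_nonneg

theorem sum_smul_column (hE : IsReproducingKernel S E) (hS : IsCoherent S) {Z : Matrix α α ℂ}
    (hZ : Z ∈ S) (g k : α) : ∑ g', Z g' g • E g' k = Z * E g k := by
  refine hE.ext (S.sum_mem fun g' _ => S.smul_mem _ (hE.mem g' k)) (hS.mul_mem hZ (hE.mem g k))
    fun W hW => ?_
  calc trace (W * (∑ g', Z g' g • E g' k)ᵀ)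
      = ∑ g', Z g' g * W g' k := by
        simp only [transpose_sum, Matrix.mul_sum, trace_sum, transpose_smul, mul_smul_comm,
          trace_smul, hE.trace_mul _ _ W hW, smul_eq_mul]
    _ = (Zᵀ * W) g k := by simp only [mul_apply, transpose_apply]
    _ = trace (Zᵀ * W * (E g k)ᵀ) :=
        (hE.trace_mul g k _ (hS.mul_mem (hS.transpose_mem hZ) hW)).symm
    _ = trace (W * (Z * E g k)ᵀ) := by rw [transpose_mul, Matrix.mul_assoc, trace_mul_comm,
          Matrix.mul_assoc]

theorem sum_mul_eq (hE : IsReproducingKernel S E) (hS : IsCoherent S) (g k : α) :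
    ∑ g', E g g' * E g' k = (∑ a, ∑ b, E a b * (E a b)ᴴ) * E g k := by
  have hexpand (g' : α) : E g g' = ∑ a, ∑ b, E b a g' g • E a b := by
    conv_lhs => rw [← hE.sum_smul (hE.mem g g')]
    refine Finset.sum_congr rfl fun a _ => Finset.sum_congr rfl fun b _ => ?_
    rw [hE.apply_comm g g', ← hE.transpose hS a b, transpose_apply]
  calc ∑ g', E g g' * E g' k
      = ∑ g', ∑ a, ∑ b, E a b * (E b a g' g • E g' k) := by
        refine Finset.sum_congr rfl fun g' _ => ?_
        rw [hexpand g']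
        simp only [Finset.sum_mul, smul_mul_assoc, mul_smul_comm]
    _ = ∑ a, ∑ b, E a b * ∑ g', E b a g' g • E g' k := by
        rw [Finset.sum_comm]
        simp only [Finset.mul_sum]
        exact Finset.sum_congr rfl fun a _ => Finset.sum_comm
    _ = (∑ a, ∑ b, E a b * (E a b)ᴴ) * E g k := by
        simp only [hE.sum_smul_column hS (hE.mem _ _), hE.conjTranspose hS, Finset.sum_mul,
          Matrix.mul_assoc]

end IsReproducingKernel

end CoherentKernel

section AgreeOnSupport

variable {α β : Type*} {N : Matrix (α × β) (α × β) ℂ}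

/-- `X` and `Y` take equal values at `(g, g')` and `(h, h')` whenever `N` does not vanish at
`((g, h), (g', h'))`. For `0`-`1` matrices `X` and `Y` this is the vanishing condition on an
isomorphism matrix, phrased so that it makes sense for all matrices. -/
def AgreeOnSupport (N : Matrix (α × β) (α × β) ℂ) (X : Matrix α α ℂ) (Y : Matrix β β ℂ) : Prop :=
  ∀ g g' h h', N (g, h) (g', h') ≠ 0 → X g g' = Y h h'

namespace AgreeOnSupport

variable {X X' : Matrix α α ℂ} {Y Y' : Matrix β β ℂ}

theorem swap (hXY : AgreeOnSupport N X Y) : AgreeOnSupport (swapFactors N) Y X :=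
  fun _ _ _ _ hne => (hXY _ _ _ _ hne).symm

theorem allOnes : AgreeOnSupport N (allOnes α) (allOnes β) :=
  fun _ _ _ _ _ => rfl

theorem add (hXY : AgreeOnSupport N X Y) (hXY' : AgreeOnSupport N X' Y') :
    AgreeOnSupport N (X + X') (Y + Y') :=
  fun _ _ _ _ hne => congr_arg₂ (· + ·) (hXY _ _ _ _ hne) (hXY' _ _ _ _ hne)

theorem smul (c : ℂ) (hXY : AgreeOnSupport N X Y) : AgreeOnSupport N (c • X) (c • Y) :=
  fun _ _ _ _ hne => congr_arg (c • ·) (hXY _ _ _ _ hne)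

theorem hadamard (hXY : AgreeOnSupport N X Y) (hXY' : AgreeOnSupport N X' Y') :
    AgreeOnSupport N (X ⊙ X') (Y ⊙ Y') :=
  fun _ _ _ _ hne => congr_arg₂ (· * ·) (hXY _ _ _ _ hne) (hXY' _ _ _ _ hne)

theorem transpose (hN : N.IsHermitian) (hXY : AgreeOnSupport N X Y) : AgreeOnSupport N Xᵀ Yᵀ :=
  fun _ _ _ _ hne => hXY _ _ _ _ (star_ne_zero.mp (by rwa [hN.apply]))

theorem conjTranspose (hN : N.IsHermitian) (hXY : AgreeOnSupport N X Y) : AgreeOnSupport N Xᴴ Yᴴ :=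
  fun _ _ _ _ hne => congr_arg star (hXY.transpose hN _ _ _ _ hne)

end AgreeOnSupport

end AgreeOnSupport

section DNNCoupling

open scoped ComplexOrder Kronecker

variable {α β : Type*} [Fintype α] [Fintype β] [DecidableEq α] [DecidableEq β]

/-- `N` satisfies the conditions on a doubly nonnegative isomorphism matrix, except for the ones
that involve the adjacency relations of the graphs. Its entries are complex numbers; the order on
`ℂ` makes them real. -/
structure IsDNNCoupling (N : Matrix (α × β) (α × β) ℂ) : Prop where
  posSemidef : N.PosSemidef
  nonneg : ∀ p q, 0 ≤ N p q
  sum_right : ∀ g g', ∑ h, ∑ h', N (g, h) (g', h') = 1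
  sum_left : ∀ h h', ∑ g, ∑ g', N (g, h) (g', h') = 1
  agree_one : AgreeOnSupport N 1 1

namespace IsDNNCoupling

variable {N : Matrix (α × β) (α × β) ℂ} {A X X' : Matrix α α ℂ} {B Y Y' : Matrix β β ℂ}

theorem swap (hN : IsDNNCoupling N) : IsDNNCoupling (swapFactors N) where
  posSemidef := hN.posSemidef.submatrix Prod.swap
  nonneg _ _ := hN.nonneg _ _
  sum_right := hN.sum_left
  sum_left := hN.sum_right
  agree_one := hN.agree_one.swap

theorem choiMap_eq (hN : IsDNNCoupling N) (hXY : AgreeOnSupport N X Y) : choiMap N X = Y := by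
  ext h h'
  calc choiMap N X h h'
      = ∑ g, ∑ g', N (g, h) (g', h') * Y h h' := by
        refine Finset.sum_congr rfl fun g _ => Finset.sum_congr rfl fun g' _ => ?_
        by_cases hne : N (g, h) (g', h') = 0
        · rw [hne, zero_mul, zero_mul]
        · rw [hXY g g' h h' hne]
    _ = Y h h' := by simp only [← Finset.sum_mul, hN.sum_left, one_mul]

-- The equality case of the Schwarz inequality: the vanishing sum is the variance of `X - Y`
-- under the weights `N`.
theorem sum_mul_sub_mul_star_eq_zero (hN : IsDNNCoupling N) (hX : choiMap N X = Y)
    (hY : choiMap (swapFactors N) Y = X) :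
    ∑ p, ∑ q, N p q * ((X p.1 q.1 - Y p.2 q.2) * star (X p.1 q.1 - Y p.2 q.2)) = 0 := by
  let V : Matrix (α × β) (α × β) ℂ := X ⊗ₖ allOnes β - allOnes α ⊗ₖ Y
  have hexpand : (V ⊙ Vᴴᵀ)ᵀ = (X ⊙ Xᴴᵀ)ᵀ ⊗ₖ (allOnes β)ᵀ + (allOnes α)ᵀ ⊗ₖ (Y ⊙ Yᴴᵀ)ᵀ
      - Xᵀ ⊗ₖ Yᴴ - Xᴴ ⊗ₖ Yᵀ := by
    ext p q
    simp [V, allOnes]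
    ring
  calc ∑ p, ∑ q, N p q * ((X p.1 q.1 - Y p.2 q.2) * star (X p.1 q.1 - Y p.2 q.2))
      = trace (N * (V ⊙ Vᴴᵀ)ᵀ) := by
        rw [← sum_hadamard_eq]
        simp [V, allOnes]
    _ = trace (X * Xᴴ) + trace (Y * Yᴴ) - trace (Y * Yᴴ) - trace (X * Xᴴ) := by
        rw [hexpand, mul_sub, mul_sub, mul_add, trace_sub, trace_sub, trace_add,
          trace_mul_kronecker_transpose, hN.swap.choiMap_eq .allOnes,
          trace_mul_transpose_kronecker, hN.choiMap_eq .allOnes,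
          trace_mul_transpose_kronecker, hX, trace_mul_kronecker_transpose, hY,
          trace_allOnes_mul_transpose, trace_allOnes_mul_transpose, sum_hadamard_eq,
          sum_hadamard_eq, transpose_transpose, transpose_transpose]
    _ = 0 := by ring

theorem agreeOnSupport_iff (hN : IsDNNCoupling N) :
    AgreeOnSupport N X Y ↔ choiMap N X = Y ∧ choiMap (swapFactors N) Y = X := by
  refine ⟨fun hXY => ⟨hN.choiMap_eq hXY, hN.swap.choiMap_eq hXY.swap⟩,
    fun ⟨hX, hY⟩ g g' h h' hne => ?_⟩
  have hterm (p q : α × β) :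
      0 ≤ N p q * ((X p.1 q.1 - Y p.2 q.2) * star (X p.1 q.1 - Y p.2 q.2)) :=
    mul_nonneg (hN.nonneg p q) (mul_star_self_nonneg _)
  have hzero := hN.sum_mul_sub_mul_star_eq_zero hX hY
  rw [Fintype.sum_eq_zero_iff_of_nonneg fun p => Finset.sum_nonneg fun q _ => hterm p q] at hzero
  have hrow := congr_fun hzero (g, h)
  rw [Pi.zero_apply, Finset.sum_eq_zero_iff_of_nonneg fun q _ => hterm _ q] at hrow
  have hentry := hrow (g', h') (Finset.mem_univ _)
  exact sub_eq_zero.mp (CStarRing.mul_star_self_eq_zero_iff _ |>.mp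
    ((mul_eq_zero.mp hentry).resolve_left hne))

theorem transpose_kronecker_one_mul (hN : IsDNNCoupling N) (hXY : AgreeOnSupport N X Y) :
    (Xᵀ ⊗ₖ 1) * N = (1 ⊗ₖ Y) * N := by
  let D : Matrix (α × β) (α × β) ℂ := Xᵀ ⊗ₖ 1 - 1 ⊗ₖ Y
  have hexpand : Dᴴ * D = (Xᵀᴴ * Xᵀ) ⊗ₖ (1 : Matrix β β ℂ)ᵀ - Xᵀᴴ ⊗ₖ Yᵀᵀ - Xᵀ ⊗ₖ Yᴴ
      + (1 : Matrix α α ℂ)ᵀ ⊗ₖ (Yᴴ * Y) := by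
    simp only [D, conjTranspose_sub, conjTranspose_kronecker, conjTranspose_one, sub_mul, mul_sub,
      ← mul_kronecker_mul, Matrix.mul_one, Matrix.one_mul, transpose_one, transpose_transpose]
    abel
  have htrace : trace (N * (Dᴴ * D)) = 0 := by
    rw [hexpand, mul_add, mul_sub, mul_sub, trace_add, trace_sub, trace_sub,
      trace_mul_kronecker_transpose, hN.swap.choiMap_eq hN.agree_one.swap,
      trace_mul_kronecker_transpose,
      hN.swap.choiMap_eq (hXY.transpose hN.posSemidef.isHermitian).swap,
      trace_mul_transpose_kronecker, hN.choiMap_eq hXY,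
      trace_mul_transpose_kronecker, hN.choiMap_eq hN.agree_one,
      Matrix.one_mul, Matrix.one_mul, trace_mul_comm Xᵀ, trace_mul_comm Y]
    ring
  rw [← sub_eq_zero, ← sub_mul]
  exact mul_eq_zero_of_trace_mul_conjTranspose_mul_self_eq_zero hN.posSemidef htrace

theorem choiMap_mul (hN : IsDNNCoupling N) (hXY : AgreeOnSupport N X Y) (W : Matrix α α ℂ) :
    choiMap N (X * W) = Y * choiMap N W := by
  refine ext_iff_trace_mul_right.mpr fun Q => ?_
  calc trace (choiMap N (X * W) * Q)
      = trace (N * ((Wᵀ ⊗ₖ Q) * (Xᵀ ⊗ₖ 1))) := by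
        rw [← trace_mul_transpose_kronecker, ← mul_kronecker_mul, transpose_mul, Matrix.mul_one]
    _ = trace ((Xᵀ ⊗ₖ 1) * N * (Wᵀ ⊗ₖ Q)) := by
        rw [← Matrix.mul_assoc, trace_mul_comm, Matrix.mul_assoc]
    _ = trace (N * ((Wᵀ ⊗ₖ Q) * (1 ⊗ₖ Y))) := by
        rw [hN.transpose_kronecker_one_mul hXY, Matrix.mul_assoc, trace_mul_comm,
          Matrix.mul_assoc]
    _ = trace (Y * choiMap N W * Q) := by
        rw [← mul_kronecker_mul, Matrix.mul_one, trace_mul_transpose_kronecker,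
          ← Matrix.mul_assoc, trace_mul_comm, Matrix.mul_assoc]

theorem agreeOnSupport_mul (hN : IsDNNCoupling N) (hXY : AgreeOnSupport N X Y)
    (hXY' : AgreeOnSupport N X' Y') : AgreeOnSupport N (X * X') (Y * Y') :=
  hN.agreeOnSupport_iff.mpr
    ⟨by rw [hN.choiMap_mul hXY, hN.choiMap_eq hXY'],
      by rw [hN.swap.choiMap_mul hXY.swap, hN.swap.choiMap_eq hXY'.swap]⟩

end IsDNNCoupling

end DNNCoupling

section CoherentIso

variable {α β : Type*} [Fintype α] [Fintype β]

/-- `Φ` restricts to an isomorphism from the coherent algebra `S` onto the coherent algebra `T`.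
As in `GraphEquivalent`, `Φ` is defined on all matrices; its values outside `S` are irrelevant. -/
structure IsCoherentIso (S : Submodule ℂ (Matrix α α ℂ)) (T : Submodule ℂ (Matrix β β ℂ))
    (Φ : Matrix α α ℂ →ₗ[ℂ] Matrix β β ℂ) : Prop where
  bijOn : Set.BijOn Φ S T
  map_conjTranspose : ∀ {X}, X ∈ S → Φ Xᴴ = (Φ X)ᴴ
  map_mul : ∀ {X Y}, X ∈ S → Y ∈ S → Φ (X * Y) = Φ X * Φ Y
  map_hadamard : ∀ {X Y}, X ∈ S → Y ∈ S → Φ (X ⊙ Y) = Φ X ⊙ Φ Y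

namespace IsCoherentIso

variable [DecidableEq α] [DecidableEq β] {S : Submodule ℂ (Matrix α α ℂ)}
  {T : Submodule ℂ (Matrix β β ℂ)} {Φ : Matrix α α ℂ →ₗ[ℂ] Matrix β β ℂ}

theorem map_one (hΦ : IsCoherentIso S T Φ) (hS : IsCoherent S) (hT : IsCoherent T) : Φ 1 = 1 := by
  obtain ⟨Z, hZ, hΦZ⟩ := hΦ.bijOn.surjOn hT.one_mem
  calc Φ 1 = Φ 1 * Φ Z := by rw [hΦZ, Matrix.mul_one]
    _ = Φ Z := by rw [← hΦ.map_mul hS.one_mem hZ, Matrix.one_mul]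
    _ = 1 := hΦZ

theorem map_allOnes (hΦ : IsCoherentIso S T Φ) (hS : IsCoherent S) (hT : IsCoherent T) :
    Φ (allOnes α) = allOnes β := by
  obtain ⟨Z, hZ, hΦZ⟩ := hΦ.bijOn.surjOn hT.allOnes_mem
  have hadamard_allOnes (Y : Matrix β β ℂ) : Y ⊙ allOnes β = Y := by ext; simp [allOnes]
  have allOnes_hadamard (X : Matrix α α ℂ) : allOnes α ⊙ X = X := by ext; simp [allOnes]
  calc Φ (allOnes α) = Φ (allOnes α) ⊙ Φ Z := by rw [hΦZ, hadamard_allOnes]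
    _ = Φ Z := by rw [← hΦ.map_hadamard hS.allOnes_mem hZ, allOnes_hadamard]
    _ = allOnes β := hΦZ

-- `J * X * J` is the sum of the entries of `X` times `J`, and `Φ` fixes `J`.
theorem sum_map_apply (hΦ : IsCoherentIso S T Φ) (hS : IsCoherent S) (hT : IsCoherent T)
    {X : Matrix α α ℂ} (hX : X ∈ S) : ∑ h, ∑ h', Φ X h h' = ∑ g, ∑ g', X g g' := by
  cases isEmpty_or_nonempty β with
  | inl _ =>
    have hX0 : X = 0 := hΦ.bijOn.injOn hX S.zero_mem (Subsingleton.elim _ _)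
    simp [hX0]
  | inr hβ =>
    obtain ⟨h⟩ := hβ
    have key : Φ (allOnes α * X * allOnes α) = allOnes β * Φ X * allOnes β := by
      rw [hΦ.map_mul (hS.mul_mem hS.allOnes_mem hX) hS.allOnes_mem,
        hΦ.map_mul hS.allOnes_mem hX, hΦ.map_allOnes hS hT]
    rw [allOnes_mul_mul_allOnes, allOnes_mul_mul_allOnes, map_smul, hΦ.map_allOnes hS hT] at key
    simpa [allOnes] using (congr_fun₂ key h h).symm

end IsCoherentIso

end CoherentIso

section ChoiMapIso

open scoped ComplexOrder

variable {α β : Type*} {N : Matrix (α × β) (α × β) ℂ}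

/-- The matrices over `α` that agree on the support of `N` with some matrix in `T`: the competitor
against which minimality of `cohAlgebra A` is used. -/
def matchedSubmodule (N : Matrix (α × β) (α × β) ℂ) (T : Submodule ℂ (Matrix β β ℂ)) :
    Submodule ℂ (Matrix α α ℂ) where
  carrier := {X | ∃ Y ∈ T, AgreeOnSupport N X Y}
  zero_mem' := ⟨0, T.zero_mem, fun _ _ _ _ _ => rfl⟩
  add_mem' := fun ⟨_, hY, hXY⟩ ⟨_, hY', hXY'⟩ => ⟨_, T.add_mem hY hY', hXY.add hXY'⟩
  smul_mem' c _ := fun ⟨_, hY, hXY⟩ => ⟨_, T.smul_mem c hY, hXY.smul c⟩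

namespace IsDNNCoupling

variable [Fintype α] [Fintype β] [DecidableEq α] [DecidableEq β]
  {A X : Matrix α α ℂ} {B : Matrix β β ℂ}

theorem isCoherent_matchedSubmodule (hN : IsDNNCoupling N) {T : Submodule ℂ (Matrix β β ℂ)}
    (hT : IsCoherent T) : IsCoherent (matchedSubmodule N T) where
  one_mem := ⟨1, hT.one_mem, hN.agree_one⟩
  allOnes_mem := ⟨allOnes β, hT.allOnes_mem, .allOnes⟩
  mul_mem := fun ⟨_, hY, hXY⟩ ⟨_, hY', hXY'⟩ =>
    ⟨_, hT.mul_mem hY hY', hN.agreeOnSupport_mul hXY hXY'⟩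
  conjTranspose_mem := fun ⟨_, hY, hXY⟩ =>
    ⟨_, hT.conjTranspose_mem hY, hXY.conjTranspose hN.posSemidef.isHermitian⟩
  hadamard_mem := fun ⟨_, hY, hXY⟩ ⟨_, hY', hXY'⟩ => ⟨_, hT.hadamard_mem hY hY', hXY.hadamard hXY'⟩

theorem choiMap_mem_and_agreeOnSupport (hN : IsDNNCoupling N) (hAB : AgreeOnSupport N A B)
    (hX : X ∈ cohAlgebra A) :
    choiMap N X ∈ cohAlgebra B ∧ AgreeOnSupport N X (choiMap N X) := by
  obtain ⟨Y, hY, hXY⟩ := mem_cohAlgebra_iff.mp hX (matchedSubmodule N (cohAlgebra B))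
    ⟨B, self_mem_cohAlgebra B, hAB⟩ (hN.isCoherent_matchedSubmodule (isCoherent_cohAlgebra B))
  rw [hN.choiMap_eq hXY]
  exact ⟨hY, hXY⟩

theorem leftInvOn_choiMap (hN : IsDNNCoupling N) (hAB : AgreeOnSupport N A B) :
    Set.LeftInvOn (choiMap (swapFactors N)) (choiMap N) (cohAlgebra A) := fun _ hX =>
  hN.swap.choiMap_eq (hN.choiMap_mem_and_agreeOnSupport hAB hX).2.swap

theorem isCoherentIso_choiMap (hN : IsDNNCoupling N) (hAB : AgreeOnSupport N A B) :
    IsCoherentIso (cohAlgebra A) (cohAlgebra B) (choiMap N) where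
  bijOn := Set.InvOn.bijOn ⟨hN.leftInvOn_choiMap hAB, hN.swap.leftInvOn_choiMap hAB.swap⟩
    (fun _ hX => (hN.choiMap_mem_and_agreeOnSupport hAB hX).1)
    (fun _ hY => (hN.swap.choiMap_mem_and_agreeOnSupport hAB.swap hY).1)
  map_conjTranspose hX := hN.choiMap_eq <|
    (hN.choiMap_mem_and_agreeOnSupport hAB hX).2.conjTranspose hN.posSemidef.isHermitian
  map_mul hX _ := hN.choiMap_mul (hN.choiMap_mem_and_agreeOnSupport hAB hX).2 _
  map_hadamard hX hY := hN.choiMap_eq <|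
    (hN.choiMap_mem_and_agreeOnSupport hAB hX).2.hadamard
      (hN.choiMap_mem_and_agreeOnSupport hAB hY).2

end IsDNNCoupling

end ChoiMapIso

section ChoiMatrix

open scoped ComplexOrder Kronecker

variable {α β : Type*} [Fintype α] [Fintype β] [DecidableEq α]

/-- The Choi matrix of the composite of `Φ` with the projection given by the reproducing
kernel `E`. -/
def choiMatrix (Φ : Matrix α α ℂ →ₗ[ℂ] Matrix β β ℂ) (E : α → α → Matrix α α ℂ) :
    Matrix (α × β) (α × β) ℂ :=
  .of fun p q => Φ (E p.1 q.1) p.2 q.2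

namespace IsCoherentIso

variable {S : Submodule ℂ (Matrix α α ℂ)} {T : Submodule ℂ (Matrix β β ℂ)}
  {Φ : Matrix α α ℂ →ₗ[ℂ] Matrix β β ℂ} {E : α → α → Matrix α α ℂ}

theorem agreeOnSupport_choiMatrix (hΦ : IsCoherentIso S T Φ) (hS : IsCoherent S)
    (hE : IsReproducingKernel S E) {X : Matrix α α ℂ} (hX : X ∈ S) :
    AgreeOnSupport (choiMatrix Φ E) X (Φ X) := by
  intro g g' h h' hne
  have hmul : Φ X ⊙ Φ (E g g') = X g g' • Φ (E g g') := by
    rw [← hΦ.map_hadamard hX (hE.mem g g'), hE.hadamard hS hX, map_smul]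
  exact mul_right_cancel₀ hne (congr_fun₂ hmul h h').symm

theorem choiMatrix_nonneg (hΦ : IsCoherentIso S T Φ) (hS : IsCoherent S)
    (hE : IsReproducingKernel S E) (p q : α × β) : 0 ≤ choiMatrix Φ E p q := by
  by_cases hne : choiMatrix Φ E p q = 0
  · exact hne.ge
  · exact (hE.apply_self_nonneg hS p.1 q.1).trans_eq
      (hΦ.agreeOnSupport_choiMatrix hS hE (hE.mem p.1 q.1) p.1 q.1 p.2 q.2 hne)

theorem choiMatrix_mul_self (hΦ : IsCoherentIso S T Φ) (hS : IsCoherent S)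
    (hE : IsReproducingKernel S E) :
    choiMatrix Φ E * choiMatrix Φ E
      = (1 ⊗ₖ ∑ a, ∑ b, Φ (E a b) * (Φ (E a b))ᴴ) * choiMatrix Φ E := by
  have hmem (a b : α) : E a b * (E a b)ᴴ ∈ S :=
    hS.mul_mem (hE.mem a b) (hS.conjTranspose_mem (hE.mem a b))
  have hblock (g k : α) : ∑ g', Φ (E g g') * Φ (E g' k)
      = (∑ a, ∑ b, Φ (E a b) * (Φ (E a b))ᴴ) * Φ (E g k) := by
    simp only [← hΦ.map_conjTranspose (hE.mem _ _), ← hΦ.map_mul (hE.mem _ _) (hE.mem _ _),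
      ← hΦ.map_mul (hE.mem _ _) (hS.conjTranspose_mem (hE.mem _ _)), ← map_sum]
    rw [hE.sum_mul_eq hS, hΦ.map_mul
      (S.sum_mem fun a _ => S.sum_mem fun b _ => hmem a b) (hE.mem g k)]
  ext ⟨g, h⟩ ⟨k, l⟩
  calc (choiMatrix Φ E * choiMatrix Φ E) (g, h) (k, l)
      = (∑ g', Φ (E g g') * Φ (E g' k)) h l := by
        simp only [mul_apply, Fintype.sum_prod_type, Matrix.sum_apply, choiMatrix, of_apply]
    _ = _ := by
        rw [hblock]
        simp [mul_apply, Fintype.sum_prod_type, choiMatrix, one_apply]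

theorem choiMatrix_posSemidef (hΦ : IsCoherentIso S T Φ) (hS : IsCoherent S)
    (hE : IsReproducingKernel S E) : (choiMatrix Φ E).PosSemidef := by
  have hherm : (choiMatrix Φ E).IsHermitian := .ext fun p q => by
    simp only [choiMatrix, of_apply]
    rw [← conjTranspose_apply, ← hΦ.map_conjTranspose (hE.mem _ _), hE.conjTranspose hS]
  refine posSemidef_of_mul_self_eq_mul hherm (PosSemidef.one.kronecker ?_)
    (hΦ.choiMatrix_mul_self hS hE)
  exact posSemidef_sum _ fun a _ => posSemidef_sum _ fun b _ => posSemidef_self_mul_conjTranspose _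

variable [DecidableEq β] in
theorem isDNNCoupling_choiMatrix (hΦ : IsCoherentIso S T Φ) (hS : IsCoherent S)
    (hT : IsCoherent T) (hE : IsReproducingKernel S E) : IsDNNCoupling (choiMatrix Φ E) where
  posSemidef := hΦ.choiMatrix_posSemidef hS hE
  nonneg := hΦ.choiMatrix_nonneg hS hE
  sum_right g g' := by
    calc ∑ h, ∑ h', Φ (E g g') h h' = trace (allOnes α * (E g g')ᵀ) := by
          rw [hΦ.sum_map_apply hS hT (hE.mem g g'), trace_allOnes_mul_transpose]
      _ = 1 := hE.trace_mul g g' _ hS.allOnes_mem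
  sum_left h h' := by
    calc ∑ g, ∑ g', Φ (E g g') h h' = Φ (∑ g, ∑ g', allOnes α g g' • E g g') h h' := by
          simp [allOnes, Matrix.sum_apply]
      _ = 1 := by rw [hE.sum_smul hS.allOnes_mem, hΦ.map_allOnes hS hT, allOnes, of_apply]
  agree_one := hΦ.map_one hS hT ▸ hΦ.agreeOnSupport_choiMatrix hS hE hS.one_mem

end IsCoherentIso

end ChoiMatrix

section Equivalence

open scoped ComplexOrder

variable {α β : Type*} [DecidableEq α] [DecidableEq β]

theorem relEq_iff (G : SimpleGraph α) (H : SimpleGraph β) [DecidableRel G.Adj] [DecidableRel H.Adj]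
    (g g' : α) (h h' : β) :
    relEq G H g g' h h' ↔ (1 : Matrix α α ℂ) g g' = (1 : Matrix β β ℂ) h h' ∧
      G.adjMatrix ℂ g g' = H.adjMatrix ℂ h h' := by
  simp only [relEq, one_apply, SimpleGraph.adjMatrix_apply]
  split_ifs <;> simp_all

variable [Fintype α] [Fintype β]

theorem equivalent_iff_dnn_iso_general (A : Matrix α α ℂ) (B : Matrix β β ℂ) :
    (∃ Φ, IsCoherentIso (cohAlgebra A) (cohAlgebra B) Φ ∧ Φ A = B) ↔
      ∃ N, IsDNNCoupling N ∧ AgreeOnSupport N A B := by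
  constructor
  · rintro ⟨Φ, hΦ, rfl⟩
    have hS := isCoherent_cohAlgebra A
    obtain ⟨E, hE⟩ := hS.exists_isReproducingKernel
    exact ⟨choiMatrix Φ E, hΦ.isDNNCoupling_choiMatrix hS (isCoherent_cohAlgebra _) hE,
      hΦ.agreeOnSupport_choiMatrix hS hE (self_mem_cohAlgebra A)⟩
  · rintro ⟨N, hN, hAB⟩
    exact ⟨choiMap N, hN.isCoherentIso_choiMap hAB, hN.choiMap_eq hAB⟩

variable (G : SimpleGraph α) (H : SimpleGraph β) [DecidableRel G.Adj] [DecidableRel H.Adj]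

theorem graphEquivalent_iff :
    GraphEquivalent G H ↔ ∃ Φ, IsCoherentIso (cohAlgebra (G.adjMatrix ℂ))
      (cohAlgebra (H.adjMatrix ℂ)) Φ ∧ Φ (G.adjMatrix ℂ) = H.adjMatrix ℂ :=
  exists_congr fun _ =>
    ⟨fun ⟨hbij, hstar, hmul, hhad, hmap⟩ => ⟨⟨hbij, fun hX => hstar _ hX,
      fun hX hY => hmul _ hX _ hY, fun hX hY => hhad _ hX _ hY⟩, hmap⟩,
    fun ⟨hΦ, hmap⟩ => ⟨hΦ.bijOn, fun _ hX => hΦ.map_conjTranspose hX,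
      fun _ hX _ hY => hΦ.map_mul hX hY, fun _ hX _ hY => hΦ.map_hadamard hX hY, hmap⟩⟩

theorem isDNNCoupling_map_ofReal_iff (M : Matrix (α × β) (α × β) ℝ) :
    IsDNNCoupling (M.map Complex.ofReal) ∧
      AgreeOnSupport (M.map Complex.ofReal) (G.adjMatrix ℂ) (H.adjMatrix ℂ) ↔
    IsIsoMatrix G H M ∧ M.PosSemidef ∧ ∀ p q, 0 ≤ M p q := by
  have hrel : AgreeOnSupport (M.map Complex.ofReal) 1 1 ∧
        AgreeOnSupport (M.map Complex.ofReal) (G.adjMatrix ℂ) (H.adjMatrix ℂ) ↔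
      ∀ g g' h h', ¬ relEq G H g g' h h' → M (g, h) (g', h') = 0 := by
    simp only [AgreeOnSupport, relEq_iff, ← forall_and, map_apply, Ne, Complex.ofReal_eq_zero]
    grind
  have hpsd : (M.map Complex.ofReal).PosSemidef ↔ M.PosSemidef := posSemidef_map_ofReal_iff
  have hnonneg : (∀ p q, 0 ≤ M.map Complex.ofReal p q) ↔ ∀ p q, 0 ≤ M p q :=
    forall₂_congr fun _ _ => Complex.zero_le_real
  have hright : (∀ g g', ∑ h, ∑ h', M.map Complex.ofReal (g, h) (g', h') = 1) ↔
      ∀ g g', ∑ h, ∑ h', M (g, h) (g', h') = 1 := by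
    simp only [map_apply]
    norm_cast
  have hleft : (∀ h h', ∑ g, ∑ g', M.map Complex.ofReal (g, h) (g', h') = 1) ↔
      ∀ h h', ∑ g, ∑ g', M (g, h) (g', h') = 1 := by
    simp only [map_apply]
    norm_cast
  rw [IsIsoMatrix, ← hrel, ← hpsd, ← hnonneg, ← hright, ← hleft]
  exact ⟨fun ⟨hM, hA⟩ => ⟨⟨hM.sum_right, hM.sum_left, hM.agree_one, hA⟩, hM.posSemidef, hM.nonneg⟩,
    fun ⟨⟨hr, hl, h1, hA⟩, hM, h0⟩ => ⟨⟨hM, h0, hr, hl, h1⟩, hA⟩⟩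

theorem exists_isDNNCoupling_adjMatrix_iff :
    (∃ N, IsDNNCoupling N ∧ AgreeOnSupport N (G.adjMatrix ℂ) (H.adjMatrix ℂ)) ↔
      ∃ M, IsIsoMatrix G H M ∧ M.PosSemidef ∧ ∀ p q, 0 ≤ M p q := by
  simp only [← isDNNCoupling_map_ofReal_iff]
  refine ⟨fun ⟨N, hN⟩ => ⟨N.map Complex.re, ?_⟩, fun ⟨M, hM⟩ => ⟨M.map Complex.ofReal, hM⟩⟩
  have hre : (N.map Complex.re).map Complex.ofReal = N := by
    ext p q
    exact (Complex.eq_re_of_ofReal_le (hN.1.nonneg p q)).symm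
  rwa [hre]

end Equivalence

/-- Two graphs are equivalent iff they are `DNN`-isomorphic. -/
theorem equivalent_iff_dnn_iso {α β : Type*}
    [Fintype α] [Fintype β] [DecidableEq α] [DecidableEq β]
    (G : SimpleGraph α) (H : SimpleGraph β)
    [DecidableRel G.Adj] [DecidableRel H.Adj] :
    GraphEquivalent G H ↔
      ∃ M, IsIsoMatrix G H M ∧ M.PosSemidef ∧ ∀ p q, 0 ≤ M p q := by
  rw [graphEquivalent_iff, equivalent_iff_dnn_iso_general, exists_isDNNCoupling_adjMatrix_iff]
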